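/- Let I be a finite set of classes with |I| = n, let m satisfy 2 ≤ m ≤ n, and let e be an m-voting assignment on I. Fix a label l ∈ I and suppose e(J) = l for every J ∈ P_m with l ∈ J. Then |C_l| = C(n − 1, m − 1), and for every label b ∈ I with b ≠ l, |C_b| ≤ C(n − 1, m − 1) − C(n − 2, m − 2). Consequently, since C(n − 2, m − 2) ≥ 1, the set of dominant labels is exactly D = {l}. -/

import Mathlib

/-!
Since `e J ∈ J`, the sets voting for `l` are exactly the `m`-subsets containing `l`, and there are
`C(n-1, m-1)` of them. A set voting for some `b ≠ l` contains `b` and avoids `l`, so it is one of the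
`C(n-2, m-1)` `m`-subsets of `I \ {l}` containing `b`; Pascal's rule
`C(n-1, m-1) = C(n-2, m-2) + C(n-2, m-1)` turns this into the stated bound. As `C(n-2, m-2) ≥ 1`,
every `b ≠ l` gets strictly fewer votes than `l`. Both counts come from
`card_powersetCard_filter_mem_eq_choose`.
-/

/-- Obtained by complement: the `(k+1)`-subsets of `S` avoiding `b` are the `(k+1)`-subsets of
`S.erase b`, and Pascal's rule gives the difference. -/
theorem card_powersetCard_filter_mem_eq_choose {α : Type*} [DecidableEq α] (S : Finset α) (k : ℕ)
    (b : α) (hb : b ∈ S) :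
    ((S.powersetCard (k + 1)).filter (fun J => b ∈ J)).card = Nat.choose (S.card - 1) k := by
  have hsplit := Finset.card_filter_add_card_filter_not (s := S.powersetCard (k + 1))
    (fun J => b ∈ J)
  have havoid : (S.powersetCard (k + 1)).filter (fun J => ¬ b ∈ J)
      = (S.erase b).powersetCard (k + 1) := by
    ext J
    simp only [Finset.mem_filter, Finset.mem_powersetCard, Finset.subset_erase]
    tauto
  rw [havoid, Finset.card_powersetCard, Finset.card_powersetCard, Finset.card_erase_of_mem hb]
    at hsplit
  obtain ⟨c, hc⟩ : ∃ c, S.card = c + 1 :=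
    Nat.exists_eq_succ_of_ne_zero (Finset.card_ne_zero_of_mem hb)
  rw [hc, Nat.choose_succ_succ', Nat.add_sub_cancel] at hsplit
  rw [hc, Nat.add_sub_cancel]
  omega

/-- In the generalized `m`-voting scheme, if every `m`-subset
containing `l` votes for `l`, then `|C_l| = C(n-1, m-1)`, every other label
gets at most `C(n-1, m-1) - C(n-2, m-2)` votes, `C(n-2, m-2) ≥ 1`, and the set
of dominant labels is exactly `{l}`. -/
theorem bemi_m_unanimous_winner {α : Type*} [DecidableEq α]
    (I : Finset α) (n m : ℕ) (hn : I.card = n) (hm2 : 2 ≤ m) (hmn : m ≤ n)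
    (e : Finset α → α) (he : ∀ J ∈ I.powersetCard m, e J ∈ J)
    (l : α) (hl : l ∈ I)
    (hvote : ∀ J ∈ I.powersetCard m, l ∈ J → e J = l) :
    ((I.powersetCard m).filter (fun J => e J = l)).card
      = Nat.choose (n - 1) (m - 1) ∧
    (∀ b ∈ I, b ≠ l →
      ((I.powersetCard m).filter (fun J => e J = b)).card ≤
        Nat.choose (n - 1) (m - 1) - Nat.choose (n - 2) (m - 2)) ∧
    1 ≤ Nat.choose (n - 2) (m - 2) ∧
    (I.filter (fun b => ∀ c ∈ I,
        ((I.powersetCard m).filter (fun J => e J = c)).card ≤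
          ((I.powersetCard m).filter (fun J => e J = b)).card)) = {l} := by
  obtain ⟨k, rfl⟩ : ∃ k, m = k + 2 := ⟨m - 2, by omega⟩
  obtain ⟨p, rfl⟩ : ∃ p, n = p + 2 := ⟨n - 2, by omega⟩
  have hpascal : Nat.choose (p + 1) (k + 1) = Nat.choose p k + Nat.choose p (k + 1) :=
    Nat.choose_succ_succ p k
  have hpos : 1 ≤ Nat.choose p k := Nat.choose_pos (by omega)
  have hwin : ((I.powersetCard (k + 2)).filter (fun J => e J = l)).card
      = Nat.choose (p + 1) (k + 1) := by
    have hcongr : (I.powersetCard (k + 2)).filter (fun J => e J = l)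
        = (I.powersetCard (k + 2)).filter (fun J => l ∈ J) :=
      Finset.filter_congr fun J hJ => ⟨fun h => h ▸ he J hJ, hvote J hJ⟩
    rw [hcongr, card_powersetCard_filter_mem_eq_choose I (k + 1) l hl, hn]
    rfl
  have hlose : ∀ b ∈ I, b ≠ l →
      ((I.powersetCard (k + 2)).filter (fun J => e J = b)).card ≤ Nat.choose p (k + 1) := by
    intro b hb hbl
    have hsub : (I.powersetCard (k + 2)).filter (fun J => e J = b)
        ⊆ ((I.erase l).powersetCard (k + 2)).filter (fun J => b ∈ J) := by
      intro J hJ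
      obtain ⟨hJm, hJb⟩ := Finset.mem_filter.1 hJ
      have hlJ : l ∉ J := fun h => hbl (hJb.symm.trans (hvote J hJm h))
      have hJI := Finset.mem_powersetCard.1 hJm
      exact Finset.mem_filter.2 ⟨Finset.mem_powersetCard.2
        ⟨Finset.subset_erase.2 ⟨hJI.1, hlJ⟩, hJI.2⟩, hJb ▸ he J hJm⟩
    have hcard := Finset.card_le_card hsub
    rw [card_powersetCard_filter_mem_eq_choose (I.erase l) (k + 1) b
      (Finset.mem_erase.2 ⟨hbl, hb⟩), Finset.card_erase_of_mem hl, hn] at hcard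
    exact hcard
  refine ⟨hwin, fun b hb hbl => ?_, hpos, ?_⟩
  · have hle := hlose b hb hbl
    change _ ≤ Nat.choose (p + 1) (k + 1) - Nat.choose p k
    omega
  · ext b
    rw [Finset.mem_filter, Finset.mem_singleton]
    constructor
    · rintro ⟨hb, hdom⟩
      by_contra hbl
      have hle := hlose b hb hbl
      have hge := hdom l hl
      omega
    · rintro rfl
      refine ⟨hl, fun c hc => ?_⟩
      by_cases hcb : c = b
      · rw [hcb]
      · have hle := hlose c hc hcb
        omega
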